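/- arXiv:1812.11213 — 2 statements merged into one kernel-verified Lean document; each statement's English description precedes it below -/
import Mathlib

section
/- For every flag 𝓕 of V and all integers q, r ≥ 1, the set {u ∈ V_q ∩ V_{r−1}^⊥ | b(u,v) = 0 for all v ∈ V_r ∩ V_{q−1}^⊥} equals V_q ∩ V_r^⊥ + V_{q−1} ∩ V_{r−1}^⊥; that is, b induces a nondegenerate bilinear pairing Φ_qr × Φ_rq → K. -/
open Module

/-- The orthogonal complement of a subspace `L` with respect to a bilinear form `b`:
`L^⊥ = {v ∈ V | b(v,w) = 0 for all w ∈ L}`. -/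
def perp {K V : Type*} [Field K] [AddCommGroup V] [Module K V]
    (B : V →ₗ[K] V →ₗ[K] K) (L : Submodule K V) : Submodule K V where
  carrier := {v | ∀ w ∈ L, B v w = 0}
  add_mem' := by
    intro a b ha hb w hw
    simp [map_add, LinearMap.add_apply, ha w hw, hb w hw]
  zero_mem' := by
    intro w hw
    simp
  smul_mem' := by
    intro c a ha w hw
    simp [map_smul, LinearMap.smul_apply, ha w hw]
theorem perp_perp_aux {K V : Type*} [Field K] [AddCommGroup V] [Module K V]
    [FiniteDimensional K V] (B : V →ₗ[K] V →ₗ[K] K)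
    (hsymm : ∀ u v : V, B u v = B v u)
    (hnd : ∀ v : V, (∀ w : V, B v w = 0) → v = 0) (L : Submodule K V) :
    perp B (perp B L) = L := by
  have hp : ∀ M : Submodule K V, perp B M = LinearMap.BilinForm.orthogonal B M := by
    intro M
    ext v
    rw [LinearMap.BilinForm.mem_orthogonal_iff]
    constructor
    · intro h w hw
      have := h w hw
      rw [hsymm] at this
      exact this
    · intro h w hw
      rw [hsymm]
      exact h w hw
  rw [hp, hp]
  apply LinearMap.BilinForm.orthogonal_orthogonal
  · refine ⟨fun v h => hnd v h, fun v h => hnd v fun w => ?_⟩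
    rw [hsymm]
    exact h w
  · intro u v h
    rw [hsymm]
    exact h

/-- for every flag of V and q, r ≥ 1,
{u ∈ V_q ∩ V_{r−1}^⊥ | b(u,v) = 0 for all v ∈ V_r ∩ V_{q−1}^⊥}
  = V_q ∩ V_r^⊥ + V_{q−1} ∩ V_{r−1}^⊥,
i.e. b induces a nondegenerate pairing Φ_qr × Φ_rq → K. -/
theorem statement3 {K V : Type*} [Field K] [AddCommGroup V] [Module K V]
    [FiniteDimensional K V] [CharP K 2] [PerfectField K]
    (B : V →ₗ[K] V →ₗ[K] K)
    (hsymm : ∀ u v : V, B u v = B v u)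
    (hnd : ∀ v : V, (∀ w : V, B v w = 0) → v = 0)
    (Vf : ℕ → Submodule K V) (hbot : Vf 0 = ⊥) (hmono : Monotone Vf)
    (htop : ∃ N, ∀ q, N ≤ q → Vf q = ⊤)
    (q r : ℕ) (hq : 1 ≤ q) (hr : 1 ≤ r) :
    (Vf q ⊓ perp B (Vf (r - 1))) ⊓ perp B (Vf r ⊓ perp B (Vf (q - 1)))
      = Vf q ⊓ perp B (Vf r) ⊔ Vf (q - 1) ⊓ perp B (Vf (r - 1)) := by
  have key : perp B (Vf r ⊓ perp B (Vf (q - 1))) = perp B (Vf r) ⊔ Vf (q - 1) := by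
    have h2 : perp B (perp B (Vf r) ⊔ Vf (q - 1)) = Vf r ⊓ perp B (Vf (q - 1)) := by
      apply le_antisymm
      · apply le_inf
        · conv_rhs => rw [← perp_perp_aux B hsymm hnd (Vf r)]
          exact fun v hv w hw => hv w (Submodule.mem_sup_left hw)
        · exact fun v hv w hw => hv w (Submodule.mem_sup_right hw)
      · rintro v ⟨h1, h3⟩ w hw
        obtain ⟨x, hx, y, hy, rfl⟩ := Submodule.mem_sup.1 hw
        rw [map_add, h3 y hy, hsymm, hx v h1, add_zero]
    rw [← h2, perp_perp_aux B hsymm hnd]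
  rw [key]
  have hq1 : Vf (q - 1) ≤ Vf q := hmono (Nat.sub_le _ _)
  have hr1 : perp B (Vf r) ≤ perp B (Vf (r - 1)) :=
    fun v hv w hw => hv w (hmono (Nat.sub_le _ _) hw)
  apply le_antisymm
  · rintro u ⟨⟨h1, h2⟩, h3⟩
    obtain ⟨x, hx, y, hy, rfl⟩ := Submodule.mem_sup.1 h3
    exact Submodule.add_mem_sup
      ⟨(Submodule.add_mem_iff_left _ (hq1 hy)).1 h1, hx⟩
      ⟨hy, (Submodule.add_mem_iff_right _ (hr1 hx)).1 h2⟩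
  · apply sup_le
    · rintro u ⟨h1, h2⟩
      exact ⟨⟨h1, hr1 h2⟩, Submodule.mem_sup_left h2⟩
    · rintro u ⟨h1, h2⟩
      exact ⟨⟨hq1 h1, h2⟩, Submodule.mem_sup_right h1⟩
end

section
/- Two triples (V, 𝓕, b) and (V′, 𝓕′, b′) are equivalent — i.e., there exists a K-linear isomorphism φ : V → V′ with φ(V_j) = V′_j for all j ≥ 0 and b′(φ(u), φ(v)) = b(u,v) for all u, v ∈ V — if and only if n_qr = n′_qr and n_qr^1 = n′_qr^1 for all q, r ≥ 1. -/
open Module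

/-- `n_qr`: the dimension of the quotient
`Φ_qr = (V_q ∩ V_{r−1}^⊥)/(V_q ∩ V_r^⊥ + V_{q−1} ∩ V_{r−1}^⊥)`. -/
noncomputable def nqr {K V : Type*} [Field K] [AddCommGroup V] [Module K V]
    (B : V →ₗ[K] V →ₗ[K] K) (Vf : ℕ → Submodule K V) (q r : ℕ) : ℕ :=
  Module.finrank K
    (↥(Vf q ⊓ perp B (Vf (r - 1))) ⧸
      Submodule.comap (Vf q ⊓ perp B (Vf (r - 1))).subtype
        (Vf q ⊓ perp B (Vf r) ⊔ Vf (q - 1) ⊓ perp B (Vf (r - 1))))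

/-- `n_qr^1 = n_qr − dim Φ_qr^0`, where `Φ_qr^0` is the image of
`V_q ∩ V_{r−1}^⊥ ∩ V^0` under the canonical projection onto `Φ_qr`
(`V0` is the subspace of isotropic vectors `{v | b(v,v) = 0}`). -/
noncomputable def nqr1 {K V : Type*} [Field K] [AddCommGroup V] [Module K V]
    (B : V →ₗ[K] V →ₗ[K] K) (Vf : ℕ → Submodule K V) (V0 : Submodule K V)
    (q r : ℕ) : ℕ :=
  nqr B Vf q r -
    Module.finrank K
      ↥(Submodule.map
        (Submodule.mkQ (Submodule.comap (Vf q ⊓ perp B (Vf (r - 1))).subtype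
          (Vf q ⊓ perp B (Vf r) ⊔ Vf (q - 1) ⊓ perp B (Vf (r - 1)))))
        (Submodule.comap (Vf q ⊓ perp B (Vf (r - 1))).subtype V0))

universe u v w

/-- Dimension of `V_a ∩ V_b^⊥`. -/
noncomputable def dd {K V : Type*} [Field K] [AddCommGroup V] [Module K V]
    (B : V →ₗ[K] V →ₗ[K] K) (Vf : ℕ → Submodule K V) (a b : ℕ) : ℕ :=
  Module.finrank K ↥(Vf a ⊓ perp B (Vf b))

/-- `V_a ∩ V_b^⊥` consists of isotropic vectors. -/
def PP {K V : Type*} [Field K] [AddCommGroup V] [Module K V]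
    (B : V →ₗ[K] V →ₗ[K] K) (Vf : ℕ → Submodule K V) (a b : ℕ) : Prop :=
  ∀ v ∈ Vf a, v ∈ perp B (Vf b) → B v v = 0

structure Good {K V : Type*} [Field K] [AddCommGroup V] [Module K V]
    (B : V →ₗ[K] V →ₗ[K] K) (Vf : ℕ → Submodule K V) : Prop where
  symm : ∀ u v : V, B u v = B v u
  nd : ∀ v : V, (∀ w : V, B v w = 0) → v = 0
  bot : Vf 0 = ⊥
  mono : Monotone Vf
  top : ∃ N, ∀ q, N ≤ q → Vf q = ⊤

section basics

variable {K : Type u} {V : Type v} [Field K] [AddCommGroup V] [Module K V]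

theorem mem_perp {B : V →ₗ[K] V →ₗ[K] K} {L : Submodule K V} {v : V} :
    v ∈ perp B L ↔ ∀ w ∈ L, B v w = 0 := Iff.rfl

theorem exists_sqrt (K : Type u) [Field K] [CharP K 2] [PerfectField K] (c : K) :
    ∃ d : K, d * d = c := by
  have : Fact (Nat.Prime 2) := ⟨Nat.prime_two⟩
  have : ExpChar K 2 := ExpChar.prime Nat.prime_two
  obtain ⟨d, hd⟩ := surjective_frobenius K 2 c
  exact ⟨d, by rw [← hd, frobenius_def]; ring⟩

theorem sq_add [CharP K 2] {B : V →ₗ[K] V →ₗ[K] K} (hs : ∀ u v : V, B u v = B v u) (u v : V) :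
    B (u + v) (u + v) = B u u + B v v := by
  have := CharTwo.add_self_eq_zero (B u v)
  simp only [map_add, LinearMap.add_apply, hs v u]
  linear_combination this

theorem sq_sub [CharP K 2] {B : V →ₗ[K] V →ₗ[K] K} (hs : ∀ u v : V, B u v = B v u) (u v : V) :
    B (u - v) (u - v) = B u u + B v v := by
  have := sq_add hs u (-v)
  simpa [sub_eq_add_neg] using this

theorem sq_smul {B : V →ₗ[K] V →ₗ[K] K} (c : K) (v : V) :
    B (c • v) (c • v) = c * c * B v v := by
  simp [mul_assoc]

/-- adjust by a multiple of a nonisotropic vector -/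
theorem exists_adj [CharP K 2] [PerfectField K] {B : V →ₗ[K] V →ₗ[K] K}
    (hs : ∀ u v : V, B u v = B v u) (v x : V) (hx : B x x ≠ 0) :
    ∃ c : K, B (v - c • x) (v - c • x) = 0 := by
  obtain ⟨c, hc⟩ := exists_sqrt K (B v v / B x x)
  refine ⟨c, ?_⟩
  rw [sq_sub hs, sq_smul, hc, div_mul_cancel₀ _ hx, CharTwo.add_self_eq_zero]

theorem exists_scale [PerfectField K] [CharP K 2] {B : V →ₗ[K] V →ₗ[K] K}
    (x : V) (hx : B x x ≠ 0) :
    ∃ c : K, c ≠ 0 ∧ B (c • x) (c • x) = 1 := by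
  obtain ⟨c, hc⟩ := exists_sqrt K (B x x)⁻¹
  refine ⟨c, ?_, ?_⟩
  · rintro rfl
    simp only [mul_zero] at hc
    exact inv_ne_zero hx hc.symm
  · rw [sq_smul, hc, inv_mul_cancel₀ hx]

theorem perp_eq_orth {B : V →ₗ[K] V →ₗ[K] K} (hs : ∀ u v : V, B u v = B v u)
    (L : Submodule K V) : perp B L = LinearMap.BilinForm.orthogonal B L := by
  ext v
  simp only [mem_perp, LinearMap.BilinForm.mem_orthogonal_iff]
  exact forall₂_congr fun w _ => by rw [hs]

theorem perp_perp [FiniteDimensional K V] {B : V →ₗ[K] V →ₗ[K] K}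
    (hs : ∀ u v : V, B u v = B v u) (hnd : ∀ v : V, (∀ w : V, B v w = 0) → v = 0)
    (L : Submodule K V) : perp B (perp B L) = L := by
  rw [perp_eq_orth hs, perp_eq_orth hs]
  apply LinearMap.BilinForm.orthogonal_orthogonal
  · refine ⟨fun v h => hnd v h, fun v h => hnd v fun w => by rw [hs]; exact h w⟩
  · intro u v h; rw [hs]; exact h

theorem mem_of_perp_inf [FiniteDimensional K V] {B : V →ₗ[K] V →ₗ[K] K}
    (hs : ∀ u v : V, B u v = B v u) (hnd : ∀ v : V, (∀ w : V, B v w = 0) → v = 0)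
    (A C : Submodule K V) (v : V) (hv : v ∈ perp B (A ⊓ perp B C)) :
    v ∈ perp B A ⊔ C := by
  rw [← perp_perp hs hnd (perp B A ⊔ C)]
  intro w hw
  apply hv
  constructor
  · rw [← perp_perp hs hnd A]
    intro z hz
    exact hw z (Submodule.mem_sup_left hz)
  · intro z hz
    exact hw z (Submodule.mem_sup_right hz)

theorem finrank_inf_ker [FiniteDimensional K V] (S : Submodule K V) (f : V →ₗ[K] K)
    (x : V) (hx : x ∈ S) (hfx : f x ≠ 0) :
    finrank K ↥(S ⊓ LinearMap.ker f) + 1 = finrank K S := by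
  have h := LinearMap.finrank_range_add_finrank_ker (f.domRestrict S)
  have h1 : LinearMap.range (f.domRestrict S) = ⊤ := by
    apply LinearMap.range_eq_top.2
    intro c
    refine ⟨(c / f x) • ⟨x, hx⟩, ?_⟩
    simp [hfx]
  have h2 : finrank K (LinearMap.ker (f.domRestrict S)) = finrank K ↥(S ⊓ LinearMap.ker f) := by
    rw [LinearMap.domRestrict, LinearMap.ker_comp, ← Submodule.finrank_map_subtype_eq,
      Submodule.map_comap_subtype]
  rw [h1, h2] at h
  simp at h
  omega

end basics

section split

variable {K : Type u} {V : Type v} [Field K] [AddCommGroup V] [Module K V]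

/-- restricted form -/
noncomputable abbrev rB (B : V →ₗ[K] V →ₗ[K] K) (U : Submodule K V) : U →ₗ[K] U →ₗ[K] K :=
  B.domRestrict₁₂ U U

abbrev rF (Vf : ℕ → Submodule K V) (U : Submodule K V) (j : ℕ) : Submodule K U :=
  (Vf j).comap U.subtype

/-- `τ` is a flag-compatible orthogonal projection with kernel `U`. -/
structure Spl (B : V →ₗ[K] V →ₗ[K] K) (Vf : ℕ → Submodule K V) (U : Submodule K V)
    (τ : V →ₗ[K] V) : Prop where
  memU : ∀ v, v - τ v ∈ U
  orth : ∀ v, ∀ u ∈ U, B (τ v) u = 0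
  flag : ∀ j, ∀ v ∈ Vf j, τ v ∈ Vf j

variable {B : V →ₗ[K] V →ₗ[K] K} {Vf : ℕ → Submodule K V} {U : Submodule K V} {τ : V →ₗ[K] V}

theorem Spl.perp_iff (g : Good B Vf) (s : Spl B Vf U τ) (b : ℕ) (u : U) :
    u ∈ perp (rB B U) (rF Vf U b) ↔ (u : V) ∈ perp B (Vf b) := by
  constructor
  · intro h w hw
    have h1 := h ⟨w - τ w, s.memU w⟩ (Submodule.sub_mem _ hw (s.flag b w hw))
    have h2 := s.orth w u u.2
    rw [g.symm] at h2
    simp only [LinearMap.domRestrict₁₂_apply, map_sub, h2, sub_zero] at h1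
    exact h1
  · intro h w hw
    exact h w hw

theorem Spl.good (g : Good B Vf) (s : Spl B Vf U τ) : Good (rB B U) (rF Vf U) where
  symm u v := g.symm _ _
  nd u h := by
    apply Subtype.ext
    apply g.nd
    intro w
    have h1 := h ⟨w - τ w, s.memU w⟩
    have h2 := s.orth w u u.2
    rw [g.symm] at h2
    simp only [LinearMap.domRestrict₁₂_apply, map_sub, h2, sub_zero] at h1
    exact h1
  bot := by simp [rF, g.bot]
  mono i j h := Submodule.comap_mono (g.mono h)
  top := by
    obtain ⟨N, hN⟩ := g.top
    exact ⟨N, fun q hq => by simp [rF, hN q hq]⟩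

theorem Spl.dd_eq (g : Good B Vf) (s : Spl B Vf U τ) (a b : ℕ) :
    dd (rB B U) (rF Vf U) a b = finrank K ↥(Vf a ⊓ perp B (Vf b) ⊓ U) := by
  have : rF Vf U a ⊓ perp (rB B U) (rF Vf U b) = (Vf a ⊓ perp B (Vf b)).comap U.subtype := by
    ext u
    simp only [Submodule.mem_inf, s.perp_iff g, Submodule.mem_comap, Submodule.subtype_apply]
  rw [dd, this, ← Submodule.finrank_map_subtype_eq, Submodule.map_comap_subtype, inf_comm]

theorem Spl.PP_iff (g : Good B Vf) (s : Spl B Vf U τ) (a b : ℕ) :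
    PP (rB B U) (rF Vf U) a b ↔ ∀ v ∈ Vf a, v ∈ perp B (Vf b) → v ∈ U → B v v = 0 := by
  constructor
  · intro h v hv hb hU
    exact h ⟨v, hU⟩ hv ((s.perp_iff g b _).2 hb)
  · intro h u hu hb
    exact h u hu ((s.perp_iff g b _).1 hb) u.2

theorem Spl.sub_perp (g : Good B Vf) (s : Spl B Vf U τ) (b : ℕ) (v : V)
    (hv : v ∈ perp B (Vf b)) : v - τ v ∈ perp B (Vf b) := by
  intro w hw
  have h1 := hv (w - τ w) (Submodule.sub_mem _ hw (s.flag b w hw))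
  have h2 := s.orth w _ (s.memU v)
  have h3 := s.orth v _ (s.memU w)
  rw [g.symm] at h2
  simp only [map_sub, LinearMap.sub_apply] at h1 h2 h3 ⊢
  linear_combination h1 + h2 - h3

theorem Spl.extend {V' : Type w} [AddCommGroup V'] [Module K V'] {B' : V' →ₗ[K] V' →ₗ[K] K}
    {Vf' : ℕ → Submodule K V'} {U' : Submodule K V'}
    (g : Good B Vf) (s : Spl B Vf U τ) (g' : Good B' Vf')
    (φ : U →ₗ[K] U') (hφ : ∀ u v, rB B' U' (φ u) (φ v) = rB B U u v)
    (hφf : ∀ j, ∀ u ∈ rF Vf U j, φ u ∈ rF Vf' U' j)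
    (ρ : V →ₗ[K] V') (hρ : ∀ u v, B' (ρ u) (ρ v) = B (τ u) (τ v))
    (hρU : ∀ v, ∀ u ∈ U', B' (ρ v) u = 0)
    (hρf : ∀ j, ∀ v ∈ Vf j, ρ v ∈ Vf' j) :
    ∃ ψ : V →ₗ[K] V', (∀ u v, B' (ψ u) (ψ v) = B u v) ∧ ∀ j, ∀ v ∈ Vf j, ψ v ∈ Vf' j := by
  let σ : V →ₗ[K] U := (LinearMap.id - τ).codRestrict U (fun v => s.memU v)
  have hσ : ∀ v, (σ v : V) = v - τ v := fun v => rfl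
  refine ⟨U'.subtype ∘ₗ φ ∘ₗ σ + ρ, ?_, ?_⟩
  · intro u v
    have h1 := hφ (σ u) (σ v)
    have h2 := hρ u v
    have h3 := hρU u _ (φ (σ v)).2
    have h4 := hρU v _ (φ (σ u)).2
    rw [g'.symm] at h4
    have h5 := s.orth u _ (s.memU v)
    have h6 := s.orth v _ (s.memU u)
    rw [g.symm] at h6
    simp only [LinearMap.domRestrict₁₂_apply, hσ, map_sub, LinearMap.sub_apply] at h1 h5 h6
    simp only [LinearMap.add_apply, LinearMap.comp_apply, Submodule.subtype_apply, map_add]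
    linear_combination h1 + h2 + h3 + h4 - h5 - h6
  · intro j v hv
    simp only [LinearMap.add_apply, LinearMap.comp_apply, Submodule.subtype_apply]
    refine Submodule.add_mem _ ?_ (hρf j v hv)
    exact hφf j (σ v) (Submodule.sub_mem _ hv (s.flag j v hv))

end split

section one

variable {K : Type u} {V : Type v} [Field K] [AddCommGroup V] [Module K V]

structure Hyp1 (B : V →ₗ[K] V →ₗ[K] K) (Vf : ℕ → Submodule K V) (r : ℕ) (x : V) : Prop where
  g : Good B Vf
  hr : ∀ j < r, Vf j = ⊥
  hx : x ∈ Vf r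
  xx : B x x = 1

abbrev U1 (B : V →ₗ[K] V →ₗ[K] K) (x : V) : Submodule K V := LinearMap.ker (B x)

variable {B : V →ₗ[K] V →ₗ[K] K} {Vf : ℕ → Submodule K V} {r : ℕ} {x : V}

theorem Hyp1.spl (h : Hyp1 B Vf r x) : Spl B Vf (U1 B x) ((B x).smulRight x) where
  memU v := by simp [h.xx]
  orth v u hu := by
    rw [LinearMap.mem_ker] at hu
    simp [hu]
  flag j v hv := by
    by_cases hj : j < r
    · rw [h.hr j hj, Submodule.mem_bot] at hv
      simp [hv]
    · exact Submodule.smul_mem _ _ (h.g.mono (not_lt.1 hj) h.hx)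

theorem Hyp1.dd_eq [FiniteDimensional K V] (h : Hyp1 B Vf r x) (a b : ℕ) :
    dd B Vf a b = dd (rB B (U1 B x)) (rF Vf (U1 B x)) a b + if r ≤ a ∧ b < r then 1 else 0 := by
  rw [h.spl.dd_eq h.g, dd]
  split_ifs with hc
  · rw [finrank_inf_ker _ _ x]
    · refine ⟨h.g.mono hc.1 h.hx, ?_⟩
      rw [h.hr b hc.2]
      intro w hw
      rw [Submodule.mem_bot] at hw
      simp [hw]
    · simp [h.xx]
  · rw [add_zero]
    suffices hs : Vf a ⊓ perp B (Vf b) ≤ U1 B x by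
      rw [inf_eq_left.2 hs]
    intro v hv
    change B x v = 0
    rw [h.g.symm]
    rcases not_and_or.1 hc with hc | hc
    · have : v ∈ Vf a := hv.1
      rw [h.hr a (not_le.1 hc), Submodule.mem_bot] at this
      simp [this]
    · exact hv.2 x (h.g.mono (not_lt.1 hc) h.hx)

theorem Hyp1.PP_same (h : Hyp1 B Vf r x) (hv : ∃ v ∈ Vf r, B x v = 0 ∧ B v v ≠ 0) (a b : ℕ) :
    PP (rB B (U1 B x)) (rF Vf (U1 B x)) a b ↔ PP B Vf a b := by
  rw [h.spl.PP_iff h.g]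
  refine ⟨fun H => ?_, fun H v h1 h2 _ => H v h1 h2⟩
  intro v h1 h2
  by_cases ha : a < r
  · rw [h.hr a ha, Submodule.mem_bot] at h1
    simp [h1]
  by_cases hb : b < r
  · exfalso
    obtain ⟨w, hw, hxw, hww⟩ := hv
    refine hww (H w (h.g.mono (not_lt.1 ha) hw) ?_ hxw)
    rw [h.hr b hb]
    intro w hw
    rw [Submodule.mem_bot] at hw
    simp [hw]
  · refine H v h1 h2 ?_
    rw [LinearMap.mem_ker, h.g.symm]
    exact h2 x (h.g.mono (not_lt.1 hb) h.hx)

theorem Hyp1.PP_shift (h : Hyp1 B Vf r x) (hv : ∀ v ∈ Vf r, ∃ c : K, v = c • x) (a b : ℕ) :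
    PP (rB B (U1 B x)) (rF Vf (U1 B x)) a b ↔ PP B Vf a (max b r) := by
  rw [h.spl.PP_iff h.g]
  constructor
  · intro H v h1 h2
    refine H v h1 (fun w hw => h2 w (h.g.mono (le_max_left _ _) hw)) ?_
    rw [LinearMap.mem_ker, h.g.symm]
    exact h2 x (h.g.mono (le_max_right _ _) h.hx)
  · intro H v h1 h2 h3
    refine H v h1 ?_
    rcases le_total r b with hb | hb
    · rwa [max_eq_left hb]
    · rw [max_eq_right hb]
      intro w hw
      obtain ⟨c, rfl⟩ := hv w hw
      rw [LinearMap.mem_ker, h.g.symm] at h3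
      simp [h3]

theorem Hyp1.ext {V' : Type w} [AddCommGroup V'] [Module K V'] {B' : V' →ₗ[K] V' →ₗ[K] K}
    {Vf' : ℕ → Submodule K V'} {x' : V'} (h : Hyp1 B Vf r x) (h' : Hyp1 B' Vf' r x')
    (H : ∃ φ : U1 B x →ₗ[K] U1 B' x',
      (∀ u v, rB B' (U1 B' x') (φ u) (φ v) = rB B (U1 B x) u v) ∧
      ∀ j, ∀ u ∈ rF Vf (U1 B x) j, φ u ∈ rF Vf' (U1 B' x') j) :
    ∃ ψ : V →ₗ[K] V', (∀ u v, B' (ψ u) (ψ v) = B u v) ∧ ∀ j, ∀ v ∈ Vf j, ψ v ∈ Vf' j := by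
  obtain ⟨φ, h1, h2⟩ := H
  refine h.spl.extend h.g h'.g φ h1 h2 ((B x).smulRight x') ?_ ?_ ?_
  · intro u v
    simp [h.xx, h'.xx]
  · intro v u hu
    rw [LinearMap.mem_ker] at hu
    simp [hu]
  · intro j v hv
    by_cases hj : j < r
    · rw [h.hr j hj, Submodule.mem_bot] at hv
      simp [hv]
    · exact Submodule.smul_mem _ _ (h'.g.mono (not_lt.1 hj) h'.hx)

end one

section two

variable {K : Type u} {V : Type v} [Field K] [AddCommGroup V] [Module K V]

structure Hyp2 (B : V →ₗ[K] V →ₗ[K] K) (Vf : ℕ → Submodule K V) (q r : ℕ) (ε : K) (x y : V) :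
    Prop where
  g : Good B Vf
  hr : ∀ j < r, Vf j = ⊥
  hrq : r ≤ q
  hx : x ∈ Vf q
  hy : y ∈ Vf r
  hyq : ∀ j < q, ∀ v ∈ Vf j, B y v = 0
  xx : B x x = ε
  yx : B y x = 1
  yy : B y y = 0

abbrev U2 (B : V →ₗ[K] V →ₗ[K] K) (x y : V) : Submodule K V :=
  LinearMap.ker (B y) ⊓ LinearMap.ker (B x)

variable {B : V →ₗ[K] V →ₗ[K] K} {Vf : ℕ → Submodule K V} {q r : ℕ} {ε : K} {x y : V}

theorem Hyp2.xy (h : Hyp2 B Vf q r ε x y) : B x y = 1 := by rw [h.g.symm, h.yx]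

theorem Hyp2.flag (h : Hyp2 B Vf q r ε x y) {V' : Type w} [AddCommGroup V'] [Module K V']
    {B' : V' →ₗ[K] V' →ₗ[K] K}
    {Vf' : ℕ → Submodule K V'} {x' y' : V'} (h' : Hyp2 B' Vf' q r ε x' y') (j : ℕ) (v : V)
    (hv : v ∈ Vf j) : ((B y).smulRight x' + (B x - ε • B y).smulRight y') v ∈ Vf' j := by
  have e1 : ((B y).smulRight x' + (B x - ε • B y).smulRight y') v
      = B y v • x' + (B x v - ε * B y v) • y' := by simp
  rw [e1]
  by_cases hj : j < q
  · rw [h.hyq j hj v hv]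
    by_cases hj' : j < r
    · rw [h.hr j hj', Submodule.mem_bot] at hv
      simp [hv]
    · simp only [zero_smul, zero_add]
      exact Submodule.smul_mem _ _ (h'.g.mono (not_lt.1 hj') h'.hy)
  · have := h.hrq
    exact Submodule.add_mem _ (Submodule.smul_mem _ _ (h'.g.mono (not_lt.1 hj) h'.hx))
      (Submodule.smul_mem _ _ (h'.g.mono (by omega) h'.hy))

theorem Hyp2.spl (h : Hyp2 B Vf q r ε x y) :
    Spl B Vf (U2 B x y) ((B y).smulRight x + (B x - ε • B y).smulRight y) where
  memU v := by
    have := h.xy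
    constructor <;> simp [h.xx, h.yx, h.yy, h.xy]
    ring
  orth v u hu := by
    have h1 : B y u = 0 := hu.1
    have h2 : B x u = 0 := hu.2
    simp [h1, h2]
  flag j v hv := h.flag h j v hv

theorem Hyp2.dd_eq [FiniteDimensional K V] (h : Hyp2 B Vf q r ε x y) (a b : ℕ) :
    dd B Vf a b = dd (rB B (U2 B x y)) (rF Vf (U2 B x y)) a b +
      (if r ≤ a ∧ b < q then 1 else 0) + if q ≤ a ∧ b < r then 1 else 0 := by
  rw [h.spl.dd_eq h.g, dd]
  set S := Vf a ⊓ perp B (Vf b) with hS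
  have e1 : S ⊓ U2 B x y = (S ⊓ LinearMap.ker (B y)) ⊓ LinearMap.ker (B x) := (inf_assoc _ _ _).symm
  rw [e1]
  have A : finrank K ↥(S ⊓ LinearMap.ker (B y)) + (if q ≤ a ∧ b < r then 1 else 0) =
      finrank K S := by
    split_ifs with hc
    · rw [finrank_inf_ker _ _ x]
      · refine ⟨h.g.mono hc.1 h.hx, ?_⟩
        rw [h.hr b hc.2]
        intro w hw
        rw [Submodule.mem_bot] at hw
        simp [hw]
      · simp [h.yx]
    · rw [inf_eq_left.2, add_zero]
      intro v hv
      rw [LinearMap.mem_ker]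
      rcases not_and_or.1 hc with hc | hc
      · exact h.hyq a (not_le.1 hc) v hv.1
      · rw [h.g.symm]
        exact hv.2 y (h.g.mono (not_lt.1 hc) h.hy)
  have C : finrank K ↥(S ⊓ LinearMap.ker (B y) ⊓ LinearMap.ker (B x)) +
      (if r ≤ a ∧ b < q then 1 else 0) = finrank K ↥(S ⊓ LinearMap.ker (B y)) := by
    split_ifs with hc
    · rw [finrank_inf_ker _ _ y]
      · refine ⟨⟨h.g.mono hc.1 h.hy, fun w hw => h.hyq b hc.2 w hw⟩, h.yy⟩
      · simp [h.xy]
    · rw [inf_eq_left.2, add_zero]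
      intro v hv
      rw [LinearMap.mem_ker]
      rcases not_and_or.1 hc with hc | hc
      · have : v ∈ Vf a := hv.1.1
        rw [h.hr a (not_le.1 hc), Submodule.mem_bot] at this
        simp [this]
      · rw [h.g.symm]
        exact hv.1.2 x (h.g.mono (not_lt.1 hc) h.hx)
  omega

theorem Hyp2.PP_same [CharP K 2] (h : Hyp2 B Vf q r 0 x y) (a b : ℕ) :
    PP (rB B (U2 B x y)) (rF Vf (U2 B x y)) a b ↔ PP B Vf a b := by
  rw [h.spl.PP_iff h.g]
  refine ⟨fun H => ?_, fun H v h1 h2 _ => H v h1 h2⟩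
  intro v h1 h2
  have h3 := H _ (Submodule.sub_mem _ h1 (h.spl.flag a v h1)) (h.spl.sub_perp h.g b v h2)
    (h.spl.memU v)
  rw [sq_sub h.g.symm] at h3
  have h4 : B (((B y).smulRight x + (B x - (0 : K) • B y).smulRight y) v)
    (((B y).smulRight x + (B x - (0 : K) • B y).smulRight y) v) = 0 := by
    have e1 : ((B y).smulRight x + (B x - (0 : K) • B y).smulRight y) v
      = B y v • x + B x v • y := by simp
    rw [e1, sq_add h.g.symm, sq_smul, sq_smul, h.xx, h.yy]
    simp
  rwa [h4, add_zero] at h3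

theorem Hyp2.PP_shift [CharP K 2] [FiniteDimensional K V] (h : Hyp2 B Vf q r ε x y)
    (hq : Vf r ⊓ perp B (Vf q) = ⊥)
    (hv : ∀ v ∈ Vf q, B y v = 0 → B v v = 0) (a b : ℕ) :
    PP (rB B (U2 B x y)) (rF Vf (U2 B x y)) a b ↔ PP B Vf a (max b r) := by
  rw [h.spl.PP_iff h.g]
  constructor
  · intro H v h1 h2
    have hb : v ∈ perp B (Vf b) := fun w hw => h2 w (h.g.mono (le_max_left _ _) hw)
    have hvy : B y v = 0 := by
      rw [h.g.symm]
      exact h2 y (h.g.mono (le_max_right _ _) h.hy)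
    have h3 := H _ (Submodule.sub_mem _ h1 (h.spl.flag a v h1)) (h.spl.sub_perp h.g b v hb)
      (h.spl.memU v)
    rw [sq_sub h.g.symm] at h3
    have e1 : ((B y).smulRight x + (B x - ε • B y).smulRight y) v = B x v • y := by simp [hvy]
    rw [e1, sq_smul, h.yy] at h3
    simpa using h3
  · intro H v h1 h2 h3
    rcases le_total r b with hb | hb
    · rw [max_eq_left hb] at H
      exact H v h1 h2
    · rw [max_eq_right hb] at H
      have hvy : B y v = 0 := h3.1
      rcases le_total a q with ha | ha
      · exact hv v (h.g.mono ha h1) hvy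
      · have h4 : v ∈ perp B (Vf r) ⊔ Vf q := by
          apply mem_of_perp_inf h.g.symm h.g.nd
          rw [hq]
          intro w hw
          rw [Submodule.mem_bot] at hw
          simp [hw]
        obtain ⟨s, hs, t, ht, rfl⟩ := Submodule.mem_sup.1 h4
        rw [sq_add h.g.symm]
        have hsa : s ∈ Vf a := by
          have := Submodule.sub_mem _ h1 (h.g.mono ha ht)
          simpa using this
        rw [H s hsa hs, hv t ht, add_zero]
        have : B y s = 0 := by rw [h.g.symm]; exact hs y h.hy
        simpa [this] using hvy

theorem Hyp2.ext {V' : Type w} [AddCommGroup V'] [Module K V'] {B' : V' →ₗ[K] V' →ₗ[K] K}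
    {Vf' : ℕ → Submodule K V'} {x' y' : V'} (h : Hyp2 B Vf q r ε x y)
    (h' : Hyp2 B' Vf' q r ε x' y')
    (H : ∃ φ : U2 B x y →ₗ[K] U2 B' x' y',
      (∀ u v, rB B' (U2 B' x' y') (φ u) (φ v) = rB B (U2 B x y) u v) ∧
      ∀ j, ∀ u ∈ rF Vf (U2 B x y) j, φ u ∈ rF Vf' (U2 B' x' y') j) :
    ∃ ψ : V →ₗ[K] V', (∀ u v, B' (ψ u) (ψ v) = B u v) ∧ ∀ j, ∀ v ∈ Vf j, ψ v ∈ Vf' j := by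
  obtain ⟨φ, h1, h2⟩ := H
  refine h.spl.extend h.g h'.g φ h1 h2
    ((B y).smulRight x' + (B x - ε • B y).smulRight y') ?_ ?_ ?_
  · intro u v
    simp [h.xx, h'.xx, h.yx, h.xy, h.yy, h'.yx, h'.xy, h'.yy]
  · intro v u hu
    have h1 : B' y' u = 0 := hu.1
    have h2 : B' x' u = 0 := hu.2
    simp [h1, h2]
  · exact h.flag h'

end two

section select

set_option linter.unusedSectionVars false

variable {K : Type u} {V : Type v} [Field K] [AddCommGroup V] [Module K V]
  [FiniteDimensional K V] [CharP K 2] [PerfectField K]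
  {B : V →ₗ[K] V →ₗ[K] K} {Vf : ℕ → Submodule K V} {q r : ℕ}

theorem perp_bot_eq : perp B (⊥ : Submodule K V) = ⊤ := by
  rw [eq_top_iff]
  intro v _ w hw
  rw [Submodule.mem_bot] at hw
  simp [hw]

theorem dd_zero (g : Good B Vf) (a : ℕ) : dd B Vf a 0 = finrank K (Vf a) := by
  rw [dd, g.bot, perp_bot_eq, inf_top_eq]

/-- the data `r, q` -/
structure RQ (B : V →ₗ[K] V →ₗ[K] K) (Vf : ℕ → Submodule K V) (q r : ℕ) : Prop where
  g : Good B Vf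
  hr : ∀ j < r, Vf j = ⊥
  hr' : Vf r ≠ ⊥
  hq : Vf r ⊓ perp B (Vf q) = ⊥
  hq' : Vf r ⊓ perp B (Vf (q - 1)) ≠ ⊥
  hrq : r ≤ q

theorem RQ.of_dd (g : Good B Vf) (h1 : ∀ j < r, dd B Vf j 0 = 0) (h2 : dd B Vf r 0 ≠ 0)
    (h3 : dd B Vf r q = 0) (h4 : ∀ j < q, dd B Vf r j ≠ 0) : RQ B Vf q r := by
  have hr : ∀ j < r, Vf j = ⊥ := fun j hj => by
    have := h1 j hj
    rw [dd_zero g] at this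
    exact Submodule.finrank_eq_zero.1 this
  have hrq : r ≤ q := by
    by_contra hlt
    apply h2
    rwa [dd, hr q (not_le.1 hlt), ← g.bot] at h3
  have hq1 : 1 ≤ q := by
    by_contra hlt
    have : q = 0 := by omega
    subst this
    exact h2 h3
  refine ⟨g, hr, ?_, Submodule.finrank_eq_zero.1 h3, ?_, hrq⟩
  · rw [dd_zero g] at h2
    exact fun h => h2 (Submodule.finrank_eq_zero.2 h)
  · exact fun h => h4 (q - 1) (by omega) (Submodule.finrank_eq_zero.2 h)

/-- existence of isotropic pair -/
def Iso (B : V →ₗ[K] V →ₗ[K] K) (Vf : ℕ → Submodule K V) (q r : ℕ) : Prop :=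
  ∃ y ∈ Vf r ⊓ perp B (Vf (q - 1)), ∃ x ∈ Vf q, B x x = 0 ∧ B y y = 0 ∧ B y x ≠ 0

theorem RQ.hyp2_iso (h : RQ B Vf q r) (H : Iso B Vf q r) : ∃ x y, Hyp2 B Vf q r 0 x y := by
  obtain ⟨y, hy, x, hx, hxx, hyy, hyx⟩ := H
  refine ⟨(B y x)⁻¹ • x, y, h.g, h.hr, h.hrq, Submodule.smul_mem _ _ hx, hy.1, ?_, ?_, ?_, hyy⟩
  · intro j hj v hv
    exact hy.2 v (h.g.mono (by omega) hv)
  · rw [sq_smul, hxx, mul_zero]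
  · simp [hyx]

theorem RQ.exists_x (h : RQ B Vf q r) {y : V} (hy : y ∈ Vf r) (hy0 : y ≠ 0) :
    ∃ x ∈ Vf q, B y x ≠ 0 := by
  by_contra! hc
  have : y ∈ Vf r ⊓ perp B (Vf q) := ⟨hy, hc⟩
  rw [h.hq] at this
  exact hy0 (by simpa using this)

theorem RQ.iso_iso (h : RQ B Vf r r) (hP : PP B Vf r 0) : Iso B Vf r r := by
  obtain ⟨y, hy, hy0⟩ := Submodule.exists_mem_ne_zero_of_ne_bot h.hq'
  obtain ⟨x, hx, hyx⟩ := h.exists_x hy.1 hy0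
  have h0 : ∀ v, v ∈ perp B (Vf 0) := fun v => by rw [h.g.bot, perp_bot_eq]; trivial
  exact ⟨y, hy, x, hx, hP x hx (h0 x), hP y hy.1 (h0 y), hyx⟩

theorem RQ.hyp1_span (h : RQ B Vf r r) (hP : ¬ PP B Vf r 0) (hd : finrank K (Vf r) ≤ 1) :
    ∃ x, Hyp1 B Vf r x ∧ ∀ v ∈ Vf r, ∃ c : K, v = c • x := by
  unfold PP at hP
  push Not at hP
  obtain ⟨x, hx, -, hxx⟩ := hP
  obtain ⟨c, hc, hc1⟩ := exists_scale x hxx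
  have hcx := Submodule.smul_mem _ c hx
  refine ⟨c • x, ⟨h.g, h.hr, hcx, hc1⟩, ?_⟩
  intro v hv
  have hne : (⟨c • x, hcx⟩ : Vf r) ≠ 0 := by
    intro h0
    have h0 : c • x = 0 := congrArg Subtype.val h0
    rw [h0] at hc1
    simp at hc1
  have hd1 : finrank K (Vf r) = 1 := by
    apply le_antisymm hd
    by_contra hlt
    exact h.hr' (Submodule.finrank_eq_zero.1 (by omega))
  obtain ⟨d, hd⟩ := exists_smul_eq_of_finrank_eq_one hd1 hne ⟨v, hv⟩
  exact ⟨d, (congrArg Subtype.val hd).symm⟩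

theorem RQ.hyp1_ne (h : RQ B Vf r r) (hP : ¬ PP B Vf r 0) (hd : ¬ finrank K (Vf r) ≤ 1) :
    ∃ x, Hyp1 B Vf r x ∧ ∃ v ∈ Vf r, B x v = 0 ∧ B v v ≠ 0 := by
  unfold PP at hP
  push Not at hP
  obtain ⟨x', hx', -, hxx'⟩ := hP
  obtain ⟨c, hc, hxx⟩ := exists_scale x' hxx'
  have hx := Submodule.smul_mem _ c hx'
  generalize c • x' = x at hxx hx
  by_cases hv : ∃ v ∈ Vf r, B x v = 0 ∧ B v v ≠ 0
  · exact ⟨x, ⟨h.g, h.hr, hx, hxx⟩, hv⟩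
  push Not at hv
  have hk := finrank_inf_ker (Vf r) (B x) x hx (by simp [hxx])
  have hne : Vf r ⊓ LinearMap.ker (B x) ≠ ⊥ := by
    intro h0
    rw [h0, finrank_bot] at hk
    omega
  obtain ⟨u, hu, hu0⟩ := Submodule.exists_mem_ne_zero_of_ne_bot hne
  have hxu : B x u = 0 := hu.2
  have hux : B u x = 0 := by rw [h.g.symm, hxu]
  obtain ⟨w0, hw0, huw0⟩ := h.exists_x hu.1 hu0
  set w := (B u w0)⁻¹ • (w0 - B x w0 • x) with hw
  have hwr : w ∈ Vf r := Submodule.smul_mem _ _ (Submodule.sub_mem _ hw0 (Submodule.smul_mem _ _ hx))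
  have hxw : B x w = 0 := by simp [hw, hxx]
  have huw : B u w = 1 := by simp [hw, hux, huw0]
  have huu := hv u hu.1 hxu
  have hww := hv w hwr hxw
  refine ⟨x + u, ⟨h.g, h.hr, Submodule.add_mem _ hx hu.1, ?_⟩, x + w,
    Submodule.add_mem _ hx hwr, ?_, ?_⟩
  · rw [sq_add h.g.symm, hxx, huu, add_zero]
  · simp only [map_add, LinearMap.add_apply, hxx, hxw, hux, huw, add_zero, zero_add]
    exact CharTwo.add_self_eq_zero 1
  · rw [sq_add h.g.symm, hxx, hww, add_zero]
    exact one_ne_zero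

theorem RQ.hyp2_nonIso (h : RQ B Vf q r) (hlt : r < q) (H : ¬ Iso B Vf q r) :
    ∃ x y, Hyp2 B Vf q r 1 x y ∧ ∀ v ∈ Vf q, B y v = 0 → B v v = 0 := by
  obtain ⟨y, hy, hy0⟩ := Submodule.exists_mem_ne_zero_of_ne_bot h.hq'
  obtain ⟨x, hx, hyx⟩ := h.exists_x hy.1 hy0
  have hyy : B y y = 0 := hy.2 y (h.g.mono (by omega) hy.1)
  have hH : ∀ x ∈ Vf q, B x x = 0 → B y x = 0 := by
    intro x hx hxx
    by_contra hc
    exact H ⟨y, hy, x, hx, hxx, hyy, hc⟩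
  have hxx : B x x ≠ 0 := fun h0 => hyx (hH x hx h0)
  obtain ⟨c, hc, hc1⟩ := exists_scale x hxx
  have hcy : c * B y x ≠ 0 := mul_ne_zero hc hyx
  refine ⟨c • x, (c * B y x)⁻¹ • y, ⟨h.g, h.hr, h.hrq, Submodule.smul_mem _ _ hx,
    Submodule.smul_mem _ _ hy.1, ?_, hc1, ?_, ?_⟩, ?_⟩
  · intro j hj v hv
    have := hy.2 v (h.g.mono (by omega) hv)
    simp [this]
  · simp only [map_smul, LinearMap.smul_apply, smul_eq_mul]
    field_simp
  · rw [sq_smul, hyy, mul_zero]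
  · intro v hv hyv
    by_contra hvv
    obtain ⟨d, hd⟩ := exists_adj h.g.symm x v hvv
    have hyv' : B y v = 0 := by
      simp only [map_smul, LinearMap.smul_apply, smul_eq_mul, mul_eq_zero, inv_eq_zero] at hyv
      rcases hyv with h1 | h1
      · exact absurd h1 (by simpa using hcy)
      · exact h1
    have := hH _ (Submodule.sub_mem _ hx (Submodule.smul_mem _ d hv)) hd
    apply hyx
    simpa [hyv'] using this

theorem RQ.nonIso_iff (h : RQ B Vf q r) (hlt : r < q) :
    ¬ Iso B Vf q r ↔
      (dd B Vf r (q - 1) ≤ 1 ∧ PP B Vf q r ∧ PP B Vf (q - 1) 0 ∧ ¬ PP B Vf q 0) := by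
  have h0 : ∀ v, v ∈ perp B (Vf 0) := fun v => by rw [h.g.bot, perp_bot_eq]; trivial
  constructor
  · intro H
    obtain ⟨x, y, h2, hv⟩ := h.hyp2_nonIso hlt H
    refine ⟨?_, ?_, ?_, ?_⟩
    · have hk : (Vf r ⊓ perp B (Vf (q - 1))) ⊓ LinearMap.ker (B x) = ⊥ := by
        rw [eq_bot_iff]
        rintro z ⟨hz, hxz⟩
        replace hxz : B x z = 0 := hxz
        replace hz : z ∈ Vf r ⊓ perp B (Vf (q - 1)) := hz
        by_contra hz0
        obtain ⟨w, hw, hzw⟩ := h.exists_x hz.1 hz0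
        obtain ⟨d, hd⟩ := exists_adj h.g.symm w x (by simp [h2.xx])
        refine H ⟨z, hz, w - d • x, Submodule.sub_mem _ hw (Submodule.smul_mem _ _ h2.hx), hd,
          hz.2 z (h.g.mono (by omega) hz.1), ?_⟩
        rw [h.g.symm] at hxz
        simpa [hxz] using hzw
      by_cases hz : ∃ z ∈ Vf r ⊓ perp B (Vf (q - 1)), B x z ≠ 0
      · obtain ⟨z, hz, hxz⟩ := hz
        have := finrank_inf_ker _ (B x) z hz hxz
        rw [hk, finrank_bot] at this
        rw [dd]; omega
      · push Not at hz
        exfalso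
        apply h.hq'
        rw [← hk, eq_comm, inf_eq_left]
        exact hz
    · intro v hv1 hv2
      apply hv v hv1
      rw [h.g.symm]
      exact hv2 y h2.hy
    · intro v hv1 _
      exact hv v (h.g.mono (by omega) hv1) (h2.hyq _ (by omega) v hv1)
    · intro hP
      have := hP x h2.hx (h0 x)
      rw [h2.xx] at this
      exact one_ne_zero this
  · rintro ⟨hd, hP1, hP2, hP3⟩ ⟨y, hy, x, hx, hxx, hyy, hyx⟩
    apply hP3
    intro v hv _
    have hy0 : y ≠ 0 := by
      rintro rfl
      simp at hyx
    have hsub : ∀ z ∈ Vf r ⊓ perp B (Vf (q - 1)), ∃ c : K, c • y = z := by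
      intro z hz
      have hd1 : finrank K ↥(Vf r ⊓ perp B (Vf (q - 1))) = 1 := by
        refine le_antisymm hd ?_
        by_contra hlt'
        exact h.hq' (Submodule.finrank_eq_zero.1 (by omega))
      have hne : (⟨y, hy⟩ : ↥(Vf r ⊓ perp B (Vf (q - 1)))) ≠ 0 := fun h0 =>
        hy0 (congrArg Subtype.val h0)
      obtain ⟨d, hd⟩ := exists_smul_eq_of_finrank_eq_one hd1 hne ⟨z, hz⟩
      exact ⟨d, congrArg Subtype.val hd⟩
    have key : ∀ v ∈ Vf q, B y v = 0 → B v v = 0 := by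
      intro v hv hyv
      have hm : v ∈ perp B (Vf r) ⊔ Vf (q - 1) := by
        apply mem_of_perp_inf h.g.symm h.g.nd
        intro z hz
        obtain ⟨c, rfl⟩ := hsub z hz
        rw [h.g.symm] at hyv
        simp [hyv]
      obtain ⟨s, hs, t, ht, rfl⟩ := Submodule.mem_sup.1 hm
      have hsq : s ∈ Vf q := by
        have := Submodule.sub_mem _ hv (h.g.mono (Nat.sub_le q 1) ht)
        simpa using this
      rw [sq_add h.g.symm, hP1 s hsq hs, hP2 t ht (h0 t), add_zero]
    have h1 := key (v - (B y v / B y x) • x) (Submodule.sub_mem _ hv (Submodule.smul_mem _ _ hx))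
      (by simp [hyx])
    rw [sq_sub h.g.symm, sq_smul, hxx, mul_zero, add_zero] at h1
    exact h1

end select

section main

theorem U1_lt {K : Type u} {V : Type v} [Field K] [AddCommGroup V] [Module K V]
    [FiniteDimensional K V] {B : V →ₗ[K] V →ₗ[K] K} {Vf : ℕ → Submodule K V} {r : ℕ} {x : V}
    (h : Hyp1 B Vf r x) : finrank K (U1 B x) < finrank K V := by
  apply Submodule.finrank_lt
  intro ht
  have : x ∈ U1 B x := by rw [ht]; trivial
  rw [LinearMap.mem_ker, h.xx] at this
  exact one_ne_zero this

theorem U2_lt {K : Type u} {V : Type v} [Field K] [AddCommGroup V] [Module K V]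
    [FiniteDimensional K V] {B : V →ₗ[K] V →ₗ[K] K} {Vf : ℕ → Submodule K V} {q r : ℕ} {ε : K}
    {x y : V} (h : Hyp2 B Vf q r ε x y) : finrank K (U2 B x y) < finrank K V := by
  apply Submodule.finrank_lt
  intro ht
  have h1 : x ∈ U2 B x y := by rw [ht]; trivial
  have : B y x = 0 := h1.1
  rw [h.yx] at this
  exact one_ne_zero this

theorem main_aux {K : Type u} [Field K] [CharP K 2] [PerfectField K] (n : ℕ) :
    ∀ (V : Type v) (V' : Type w) [AddCommGroup V] [Module K V] [AddCommGroup V'] [Module K V']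
      [FiniteDimensional K V] [FiniteDimensional K V']
      (B : V →ₗ[K] V →ₗ[K] K) (B' : V' →ₗ[K] V' →ₗ[K] K)
      (Vf : ℕ → Submodule K V) (Vf' : ℕ → Submodule K V'),
      Good B Vf → Good B' Vf' → finrank K V ≤ n →
      (∀ a b, dd B Vf a b = dd B' Vf' a b) → (∀ a b, PP B Vf a b ↔ PP B' Vf' a b) →
      ∃ ψ : V →ₗ[K] V', (∀ u v, B' (ψ u) (ψ v) = B u v) ∧ ∀ j, ∀ v ∈ Vf j, ψ v ∈ Vf' j := by
  classical
  induction n with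
  | zero =>
    intro V V' _ _ _ _ _ _ B B' Vf Vf' g g' hn hd hP
    have hs : Subsingleton V := finrank_zero_iff.1 (Nat.le_zero.1 hn)
    refine ⟨0, ?_, ?_⟩
    · intro u v
      rw [Subsingleton.elim u 0]
      simp
    · intro j v _
      simp
  | succ n ih =>
    intro V V' _ _ _ _ _ _ B B' Vf Vf' g g' hn hd hP
    by_cases h0 : finrank K V = 0
    · exact ih V V' B B' Vf Vf' g g' (by omega) hd hP
    obtain ⟨N, hN⟩ := g.top
    have hr : ∃ r, dd B Vf r 0 ≠ 0 := ⟨N, by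
      rw [dd_zero g, hN N le_rfl, finrank_top]; exact h0⟩
    obtain ⟨r, hr1, hr2⟩ : ∃ r, dd B Vf r 0 ≠ 0 ∧ ∀ j < r, dd B Vf j 0 = 0 :=
      ⟨Nat.find hr, Nat.find_spec hr, fun j hj => not_not.1 (Nat.find_min hr hj)⟩
    have hq : ∃ q, dd B Vf r q = 0 := ⟨N, by
      rw [dd, hN N le_rfl, Submodule.finrank_eq_zero, eq_bot_iff]
      intro v hv
      exact g.nd v fun w => hv.2 w trivial⟩
    obtain ⟨q, hq1, hq2⟩ : ∃ q, dd B Vf r q = 0 ∧ ∀ j < q, dd B Vf r j ≠ 0 :=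
      ⟨Nat.find hq, Nat.find_spec hq, fun j hj => Nat.find_min hq hj⟩
    have R : RQ B Vf q r := RQ.of_dd g hr2 hr1 hq1 hq2
    have R' : RQ B' Vf' q r := by
      simp only [hd] at hr2 hr1 hq1 hq2
      exact RQ.of_dd g' hr2 hr1 hq1 hq2
    have hfr : finrank K (Vf r) = finrank K (Vf' r) := by
      rw [← dd_zero g, ← dd_zero g', hd]
    have isoCase : Iso B Vf q r → Iso B' Vf' q r →
        ∃ ψ : V →ₗ[K] V', (∀ u v, B' (ψ u) (ψ v) = B u v) ∧ ∀ j, ∀ v ∈ Vf j, ψ v ∈ Vf' j := by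
      intro I I'
      obtain ⟨x, y, h⟩ := R.hyp2_iso I
      obtain ⟨x', y', h'⟩ := R'.hyp2_iso I'
      refine h.ext h' (ih _ _ _ _ _ _ (h.spl.good g) (h'.spl.good g') ?_ ?_ ?_)
      · have := U2_lt h
        omega
      · intro a b
        have h1 := h.dd_eq a b
        have h2 := h'.dd_eq a b
        have h3 := hd a b
        omega
      · intro a b
        rw [h.PP_same, h'.PP_same, hP]
    rcases R.hrq.lt_or_eq with hlt | heq
    · by_cases I : Iso B Vf q r
      · refine isoCase I ?_
        by_contra I'
        rw [R'.nonIso_iff hlt] at I'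
        apply (R.nonIso_iff hlt).2 _ I
        simpa only [hd, hP] using I'
      · have I' : ¬ Iso B' Vf' q r := by
          rw [R'.nonIso_iff hlt]
          rw [R.nonIso_iff hlt] at I
          simpa only [hd, hP] using I
        obtain ⟨x, y, h, hv⟩ := R.hyp2_nonIso hlt I
        obtain ⟨x', y', h', hv'⟩ := R'.hyp2_nonIso hlt I'
        refine h.ext h' (ih _ _ _ _ _ _ (h.spl.good g) (h'.spl.good g') ?_ ?_ ?_)
        · have := U2_lt h
          omega
        · intro a b
          have h1 := h.dd_eq a b
          have h2 := h'.dd_eq a b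
          have h3 := hd a b
          omega
        · intro a b
          rw [h.PP_shift R.hq hv, h'.PP_shift R'.hq hv', hP]
    · subst heq
      by_cases hPr : PP B Vf r 0
      · exact isoCase (R.iso_iso hPr) (R'.iso_iso ((hP _ _).1 hPr))
      · have hPr' : ¬ PP B' Vf' r 0 := by rwa [← hP]
        by_cases hf : finrank K (Vf r) ≤ 1
        · obtain ⟨x, h, hv⟩ := R.hyp1_span hPr hf
          obtain ⟨x', h', hv'⟩ := R'.hyp1_span hPr' (hfr ▸ hf)
          refine h.ext h' (ih _ _ _ _ _ _ (h.spl.good g) (h'.spl.good g') ?_ ?_ ?_)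
          · have := U1_lt h
            omega
          · intro a b
            have h1 := h.dd_eq a b
            have h2 := h'.dd_eq a b
            have h3 := hd a b
            omega
          · intro a b
            rw [h.PP_shift hv, h'.PP_shift hv', hP]
        · obtain ⟨x, h, hv⟩ := R.hyp1_ne hPr hf
          obtain ⟨x', h', hv'⟩ := R'.hyp1_ne hPr' (hfr ▸ hf)
          refine h.ext h' (ih _ _ _ _ _ _ (h.spl.good g) (h'.spl.good g') ?_ ?_ ?_)
          · have := U1_lt h
            omega
          · intro a b
            have h1 := h.dd_eq a b
            have h2 := h'.dd_eq a b
            have h3 := hd a b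
            omega
          · intro a b
            rw [h.PP_same hv, h'.PP_same hv', hP]

end main

section invariants

set_option linter.unusedSectionVars false

theorem prop_aux {p p' i i' j j' : Prop} (hi : i ↔ i') (hj : j ↔ j')
    (z : (p' ∨ ¬(i' ∧ j')) ↔ (p ∨ ¬(i ∧ j))) (h1 : p → i) (h2 : p → j) (h3 : p' → i')
    (h4 : p' → j') : p ↔ p' := by
  rw [← hi, ← hj] at z
  rw [← hi] at h3
  rw [← hj] at h4
  tauto

variable {K : Type u} {V : Type v} [Field K] [AddCommGroup V] [Module K V]
  [FiniteDimensional K V] {B : V →ₗ[K] V →ₗ[K] K} {Vf : ℕ → Submodule K V}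

theorem qfin (A C T : Submodule K V) (hC : C ≤ A) :
    finrank K ↥(Submodule.map (Submodule.mkQ (Submodule.comap A.subtype C))
      (Submodule.comap A.subtype T)) + finrank K ↥(C ⊓ T) = finrank K ↥(A ⊓ T) := by
  have h := LinearMap.finrank_range_add_finrank_ker
    ((Submodule.mkQ (Submodule.comap A.subtype C)).domRestrict (Submodule.comap A.subtype T))
  rw [LinearMap.range_domRestrict, LinearMap.domRestrict, LinearMap.ker_comp, Submodule.ker_mkQ,
    ← Submodule.finrank_map_subtype_eq _ (Submodule.comap _ (Submodule.comap A.subtype C)),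
    Submodule.map_comap_subtype, ← Submodule.comap_inf,
    ← Submodule.finrank_map_subtype_eq _ (Submodule.comap _ (T ⊓ C)),
    Submodule.map_comap_subtype,
    ← Submodule.finrank_map_subtype_eq _ (Submodule.comap _ T),
    Submodule.map_comap_subtype] at h
  have e : A ⊓ (T ⊓ C) = C ⊓ T := by
    rw [inf_comm T C, ← inf_assoc, inf_eq_right.2 hC]
  rwa [e] at h

theorem perp_anti {L M : Submodule K V} (h : L ≤ M) : perp B M ≤ perp B L :=
  fun _ hv w hw => hv w (h hw)

theorem C_le (hm : Monotone Vf) (q r : ℕ) :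
    Vf q ⊓ perp B (Vf r) ⊔ Vf (q - 1) ⊓ perp B (Vf (r - 1)) ≤ Vf q ⊓ perp B (Vf (r - 1)) :=
  sup_le (inf_le_inf_left _ (perp_anti (hm (Nat.sub_le r 1))))
    (inf_le_inf_right _ (hm (Nat.sub_le q 1)))

theorem nqr_eq (hm : Monotone Vf) (q r : ℕ) :
    nqr B Vf q r + dd B Vf q r + dd B Vf (q - 1) (r - 1) =
      dd B Vf q (r - 1) + dd B Vf (q - 1) r := by
  have h1 := Submodule.finrank_quotient_add_finrank
    (Submodule.comap (Vf q ⊓ perp B (Vf (r - 1))).subtype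
        (Vf q ⊓ perp B (Vf r) ⊔ Vf (q - 1) ⊓ perp B (Vf (r - 1))))
  have h2 := Submodule.finrank_sup_add_finrank_inf_eq (Vf q ⊓ perp B (Vf r))
    (Vf (q - 1) ⊓ perp B (Vf (r - 1)))
  rw [← Submodule.finrank_map_subtype_eq _ (Submodule.comap _ _), Submodule.map_comap_subtype,
    inf_eq_right.2 (C_le hm q r)] at h1
  have e : Vf q ⊓ perp B (Vf r) ⊓ (Vf (q - 1) ⊓ perp B (Vf (r - 1))) =
      Vf (q - 1) ⊓ perp B (Vf r) := by
    apply le_antisymm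
    · exact fun v hv => ⟨hv.2.1, hv.1.2⟩
    · exact fun v hv => ⟨⟨hm (Nat.sub_le q 1) hv.1, hv.2⟩, hv.1,
        perp_anti (hm (Nat.sub_le r 1)) hv.2⟩
  rw [e] at h2
  unfold nqr dd
  omega

theorem nqr1_zero_iff [CharP K 2] [PerfectField K] (g : Good B Vf) (V0 : Submodule K V)
    (hV0 : ∀ v : V, v ∈ V0 ↔ B v v = 0)
    (q r : ℕ) : nqr1 B Vf V0 q r = 0 ↔
      (PP B Vf q (r - 1) ∨ ¬ (PP B Vf q r ∧ PP B Vf (q - 1) (r - 1))) := by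
  have hC := C_le (B := B) g.mono q r
  have hPA : PP B Vf q (r - 1) ↔ Vf q ⊓ perp B (Vf (r - 1)) ≤ V0 :=
    ⟨fun h v hv => (hV0 v).2 (h v hv.1 hv.2), fun h v h1 h2 => (hV0 v).1 (h ⟨h1, h2⟩)⟩
  have hPC : (PP B Vf q r ∧ PP B Vf (q - 1) (r - 1)) ↔
      Vf q ⊓ perp B (Vf r) ⊔ Vf (q - 1) ⊓ perp B (Vf (r - 1)) ≤ V0 := by
    rw [sup_le_iff]
    exact and_congr
      ⟨fun h v hv => (hV0 v).2 (h v hv.1 hv.2), fun h v h1 h2 => (hV0 v).1 (h ⟨h1, h2⟩)⟩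
      ⟨fun h v hv => (hV0 v).2 (h v hv.1 hv.2), fun h v h1 h2 => (hV0 v).1 (h ⟨h1, h2⟩)⟩
  rw [hPA, hPC]
  unfold nqr1 nqr
  generalize Vf q ⊓ perp B (Vf r) ⊔ Vf (q - 1) ⊓ perp B (Vf (r - 1)) = C at hC ⊢
  generalize Vf q ⊓ perp B (Vf (r - 1)) = A at hC ⊢
  rw [Nat.sub_eq_zero_iff_le]
  have h1 : finrank K (↥A ⧸ Submodule.comap A.subtype C) ≤
      finrank K ↥(Submodule.map (Submodule.mkQ (Submodule.comap A.subtype C))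
        (Submodule.comap A.subtype V0)) ↔
      Submodule.comap A.subtype C ⊔ Submodule.comap A.subtype V0 = ⊤ := by
    rw [← Submodule.map_mkQ_eq_top]
    constructor
    · intro h
      exact Submodule.eq_top_of_finrank_eq (le_antisymm (Submodule.finrank_le _) h)
    · intro h
      rw [h, finrank_top]
  rw [h1]
  constructor
  · intro h
    by_contra! hc
    obtain ⟨hA, hC0⟩ := hc
    apply hA
    rw [sup_eq_right.2 (Submodule.comap_mono hC0)] at h
    intro v hv
    have : (⟨v, hv⟩ : A) ∈ Submodule.comap A.subtype V0 := by rw [h]; trivial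
    exact this
  · rintro (h | h)
    · rw [eq_top_iff]
      intro v _
      exact Submodule.mem_sup_right (h v.2)
    · obtain ⟨c, hc, hc0⟩ := SetLike.not_le_iff_exists.1 h
      rw [hV0] at hc0
      rw [eq_top_iff]
      intro v _
      obtain ⟨t, ht⟩ := exists_adj g.symm (v : V) c hc0
      have e : v = t • (⟨c, hC hc⟩ : A) + (v - t • (⟨c, hC hc⟩ : A)) := by abel
      rw [e]
      refine Submodule.add_mem_sup (Submodule.smul_mem _ _ hc) ?_
      exact (hV0 _).2 ht

end invariants
/-- Theorem 1.1(2): two triples (V, 𝓕, b) and (V', 𝓕', b') are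
equivalent (there is a linear isomorphism carrying the flag to the flag and the
form to the form) if and only if n_qr = n'_qr and n_qr^1 = n'_qr^1 for all
q, r ≥ 1. -/
theorem statement11 {K V V' : Type*} [Field K]
    [AddCommGroup V] [Module K V] [AddCommGroup V'] [Module K V']
    [FiniteDimensional K V] [FiniteDimensional K V'] [CharP K 2] [PerfectField K]
    (B : V →ₗ[K] V →ₗ[K] K) (B' : V' →ₗ[K] V' →ₗ[K] K)
    (hsymm : ∀ u v : V, B u v = B v u)
    (hsymm' : ∀ u v : V', B' u v = B' v u)
    (hnd : ∀ v : V, (∀ w : V, B v w = 0) → v = 0)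
    (hnd' : ∀ v : V', (∀ w : V', B' v w = 0) → v = 0)
    (hna : ∃ v : V, B v v ≠ 0) (hna' : ∃ v : V', B' v v ≠ 0)
    (Vf : ℕ → Submodule K V) (hbot : Vf 0 = ⊥) (hmono : Monotone Vf)
    (htop : ∃ N, ∀ q, N ≤ q → Vf q = ⊤)
    (Vf' : ℕ → Submodule K V') (hbot' : Vf' 0 = ⊥) (hmono' : Monotone Vf')
    (htop' : ∃ N, ∀ q, N ≤ q → Vf' q = ⊤)
    (V0 : Submodule K V) (hV0 : ∀ v : V, v ∈ V0 ↔ B v v = 0)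
    (V0' : Submodule K V') (hV0' : ∀ v : V', v ∈ V0' ↔ B' v v = 0) :
    (∃ φ : V ≃ₗ[K] V',
        (∀ j : ℕ, Submodule.map (φ : V →ₗ[K] V') (Vf j) = Vf' j) ∧
        ∀ u v : V, B' (φ u) (φ v) = B u v) ↔
      (∀ q r : ℕ, 1 ≤ q → 1 ≤ r →
        nqr B Vf q r = nqr B' Vf' q r ∧
        nqr1 B Vf V0 q r = nqr1 B' Vf' V0' q r) := by
  have g : Good B Vf := ⟨hsymm, hnd, hbot, hmono, htop⟩
  have g' : Good B' Vf' := ⟨hsymm', hnd', hbot', hmono', htop'⟩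
  constructor
  · rintro ⟨φ, hφ, hB⟩ q r - -
    have hinj : Function.Injective (φ : V →ₗ[K] V') := φ.injective
    have hperp : ∀ b, Submodule.map (φ : V →ₗ[K] V') (perp B (Vf b)) = perp B' (Vf' b) := by
      intro b
      apply le_antisymm
      · rintro _ ⟨v, hv, rfl⟩ w hw
        rw [← hφ] at hw
        obtain ⟨w, hw, rfl⟩ := hw
        exact (hB v w).trans (hv w hw)
      · intro v hv
        refine ⟨φ.symm v, ?_, by simp⟩
        intro w hw
        rw [← hB, LinearEquiv.apply_symm_apply]
        apply hv
        rw [← hφ]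
        exact ⟨w, hw, rfl⟩
    have hA : ∀ a b, Submodule.map (φ : V →ₗ[K] V') (Vf a ⊓ perp B (Vf b)) =
        Vf' a ⊓ perp B' (Vf' b) := by
      intro a b
      rw [Submodule.map_inf _ hinj, hφ, hperp]
    have h0 : Submodule.map (φ : V →ₗ[K] V') V0 = V0' := by
      ext v
      rw [hV0']
      constructor
      · rintro ⟨v, hv, rfl⟩
        exact (hB v v).trans ((hV0 v).1 hv)
      · intro hv
        refine ⟨φ.symm v, (hV0 _).2 ?_, by simp⟩
        rw [← hB, LinearEquiv.apply_symm_apply, hv]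
    have hf : ∀ S : Submodule K V,
        finrank K ↥(Submodule.map (φ : V →ₗ[K] V') S) = finrank K S := fun S =>
      LinearEquiv.finrank_map_eq φ S
    have hd : ∀ a b, dd B Vf a b = dd B' Vf' a b := by
      intro a b
      rw [dd, dd, ← hA, hf]
    have hn : nqr B Vf q r = nqr B' Vf' q r := by
      have h1 := nqr_eq (B := B) hmono q r
      have h2 := nqr_eq (B := B') hmono' q r
      simp only [hd] at h1
      omega
    refine ⟨hn, ?_⟩
    unfold nqr1
    rw [hn]
    have h1 := qfin _ _ V0 (C_le (B := B) hmono q r)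
    have h2 := qfin _ _ V0' (C_le (B := B') hmono' q r)
    have e1 : finrank K ↥(Vf' q ⊓ perp B' (Vf' (r - 1)) ⊓ V0') =
        finrank K ↥(Vf q ⊓ perp B (Vf (r - 1)) ⊓ V0) := by
      rw [← hf (_ ⊓ V0), Submodule.map_inf _ hinj, hA, h0]
    have e2 : finrank K ↥((Vf' q ⊓ perp B' (Vf' r) ⊔ Vf' (q - 1) ⊓ perp B' (Vf' (r - 1))) ⊓ V0') =
        finrank K ↥((Vf q ⊓ perp B (Vf r) ⊔ Vf (q - 1) ⊓ perp B (Vf (r - 1))) ⊓ V0) := by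
      rw [← hf (_ ⊓ V0), Submodule.map_inf _ hinj, Submodule.map_sup, hA, hA, h0]
    congr 1
    omega
  · intro H
    obtain ⟨N₁, hN₁⟩ := htop
    obtain ⟨N₂, hN₂⟩ := htop'
    have pt : perp B ⊤ = ⊥ := by
      rw [eq_bot_iff]
      intro v hv
      exact hnd v fun w => hv w trivial
    have pt' : perp B' ⊤ = ⊥ := by
      rw [eq_bot_iff]
      intro v hv
      exact hnd' v fun w => hv w trivial
    have key : ∀ a k b, N₁ ≤ b + k → N₂ ≤ b + k →
        dd B Vf a b = dd B' Vf' a b ∧ (PP B Vf a b ↔ PP B' Vf' a b) := by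
      intro a
      induction a with
      | zero =>
        intro k b _ _
        constructor
        · rw [dd, dd, hbot, hbot', bot_inf_eq, bot_inf_eq, finrank_bot, finrank_bot]
        · have h1 : PP B Vf 0 b := by
            intro v hv _
            rw [hbot, Submodule.mem_bot] at hv
            simp [hv]
          have h2 : PP B' Vf' 0 b := by
            intro v hv _
            rw [hbot', Submodule.mem_bot] at hv
            simp [hv]
          exact iff_of_true h1 h2
      | succ a iha =>
        intro k
        induction k with
        | zero =>
          intro b hb1 hb2
          have e1 := hN₁ b hb1
          have e2 := hN₂ b hb2
          constructor
          · rw [dd, dd, e1, e2, pt, pt', inf_bot_eq, inf_bot_eq, finrank_bot, finrank_bot]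
          · have h1 : PP B Vf (a + 1) b := by
              intro v _ hv
              rw [e1, pt, Submodule.mem_bot] at hv
              simp [hv]
            have h2 : PP B' Vf' (a + 1) b := by
              intro v _ hv
              rw [e2, pt', Submodule.mem_bot] at hv
              simp [hv]
            exact iff_of_true h1 h2
        | succ k ihk =>
          intro b hb1 hb2
          obtain ⟨i1, i2⟩ := ihk (b + 1) (by omega) (by omega)
          obtain ⟨j1, j2⟩ := iha (k + 1) b hb1 hb2
          obtain ⟨l1, l2⟩ := iha k (b + 1) (by omega) (by omega)
          obtain ⟨m1, m2⟩ := H (a + 1) (b + 1) (by omega) (by omega)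
          have n1 := nqr_eq (B := B) hmono (a + 1) (b + 1)
          have n2 := nqr_eq (B := B') hmono' (a + 1) (b + 1)
          have z1 := nqr1_zero_iff g V0 hV0 (a + 1) (b + 1)
          have z2 := nqr1_zero_iff g' V0' hV0' (a + 1) (b + 1)
          simp only [Nat.add_sub_cancel] at n1 n2 z1 z2
          refine ⟨by omega, ?_⟩
          rw [m2, z2] at z1
          have p1 : PP B Vf (a + 1) b → PP B Vf (a + 1) (b + 1) := fun h v h1 h2 =>
            h v h1 (perp_anti (hmono (Nat.le_succ b)) h2)
          have p2 : PP B Vf (a + 1) b → PP B Vf a b := fun h v h1 h2 =>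
            h v (hmono (Nat.le_succ a) h1) h2
          have p1' : PP B' Vf' (a + 1) b → PP B' Vf' (a + 1) (b + 1) := fun h v h1 h2 =>
            h v h1 (perp_anti (hmono' (Nat.le_succ b)) h2)
          have p2' : PP B' Vf' (a + 1) b → PP B' Vf' a b := fun h v h1 h2 =>
            h v (hmono' (Nat.le_succ a) h1) h2
          exact prop_aux i2 j2 z1 p1 p2 p1' p2'
    have hd : ∀ a b, dd B Vf a b = dd B' Vf' a b := fun a b =>
      (key a (N₁ + N₂) b (by omega) (by omega)).1
    have hP : ∀ a b, PP B Vf a b ↔ PP B' Vf' a b := fun a b =>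
      (key a (N₁ + N₂) b (by omega) (by omega)).2
    obtain ⟨ψ, hψ, hψf⟩ := main_aux (finrank K V) V V' B B' Vf Vf' g g' le_rfl hd hP
    have hinj : Function.Injective ψ := by
      rw [injective_iff_map_eq_zero]
      intro v hv
      apply hnd
      intro w
      rw [← hψ, hv]
      simp
    have hfr : ∀ j, finrank K (Vf j) = finrank K (Vf' j) := fun j => by
      rw [← dd_zero g, ← dd_zero g', hd]
    have hV : finrank K V = finrank K V' := by
      have := hfr (N₁ + N₂)
      rwa [hN₁ _ (by omega), hN₂ _ (by omega), finrank_top, finrank_top] at this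
    refine ⟨LinearEquiv.ofInjectiveOfFinrankEq ψ hinj hV, ?_, ?_⟩
    · intro j
      apply Submodule.eq_of_le_of_finrank_eq
      · rintro _ ⟨v, hv, rfl⟩
        exact hψf j v hv
      · rw [← hfr]
        exact LinearEquiv.finrank_map_eq _ _
    · intro u v
      exact hψ u v
end
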